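/- arXiv:1509.00630 — 2 statements merged into one kernel-verified Lean document; each statement's English description precedes it below -/
import Mathlib

section
/- There exists a universal constant C > 0 such that for every m ≥ 2, every set X of m points in ℝ^m, and every ε with 0 < ε < 1, there exist a natural number k with k ≤ ⌈C · (log m)/ε²⌉ and a map F : ℝ^m → ℝ^k such that for all x, y ∈ X, (1 − ε)·‖x − y‖² ≤ ‖F(x) − F(y)‖² ≤ (1 + ε)·‖x − y‖², where ‖·‖ denotes the Euclidean norm. -/
open Real

section JL
open MeasureTheory ProbabilityTheory

lemma jl_gauss (s : ℝ) :
    ∫ x, rexp (s / 2 * x ^ 2) ∂(gaussianReal 0 1) = √(1 / (1 - s)) := by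
  rw [integral_gaussianReal_eq_integral_smul one_ne_zero]
  have h : ∀ x : ℝ, gaussianPDFReal 0 1 x • rexp (s / 2 * x ^ 2)
      = (√(2 * π))⁻¹ * rexp (-((1 - s) / 2) * x ^ 2) := by
    intro x
    simp only [gaussianPDFReal, smul_eq_mul, NNReal.coe_one, mul_one, sub_zero]
    rw [mul_assoc, ← Real.exp_add]
    congr 2
    ring
  simp_rw [h]
  rw [integral_const_mul, integral_gaussian, ← Real.sqrt_inv, ← Real.sqrt_mul (by positivity)]
  congr 1
  have := Real.pi_pos.ne'
  by_cases hs : 1 - s = 0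
  · simp [hs]
  · field_simp

lemma jl_gauss_le (s : ℝ) (hs : s ≤ 1 / 2) :
    √(1 / (1 - s)) ≤ rexp ((s + 2 * s ^ 2) / 2) := by
  apply Real.sqrt_le_iff.2 ⟨(Real.exp_pos _).le, ?_⟩
  rw [← Real.exp_nat_mul]
  have h1 : 0 < 1 - s := by linarith
  have h2 : 1 / (1 - s) = s / (1 - s) + 1 := by field_simp; ring
  have h3 : s / (1 - s) ≤ s + 2 * s ^ 2 := by
    rw [div_le_iff₀ h1]
    nlinarith [mul_nonneg (sq_nonneg s) (by linarith : (0 : ℝ) ≤ 1 - 2 * s)]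
  calc 1 / (1 - s) = s / (1 - s) + 1 := h2
    _ ≤ rexp (s / (1 - s)) := Real.add_one_le_exp _
    _ ≤ _ := Real.exp_le_exp.2 (by push_cast; linarith)

variable {m : ℕ}

lemma jl_std (u : EuclideanSpace ℝ (Fin m)) (hu : ‖u‖ = 1) (s : ℝ) :
    ∫ g, rexp (s / 2 * (inner ℝ u g) ^ 2) ∂(stdGaussian (EuclideanSpace ℝ (Fin m)))
      = √(1 / (1 - s)) := by
  have hmap : (stdGaussian (EuclideanSpace ℝ (Fin m))).map (innerSL ℝ u) = gaussianReal 0 1 := by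
    rw [IsGaussian.map_eq_gaussianReal, integral_strongDual_stdGaussian,
      variance_dual_stdGaussian, innerSL_apply_norm, hu]
    simp
  rw [← jl_gauss, ← hmap, integral_map (by fun_prop) (by fun_prop)]
  simp

lemma jl_pi (u : EuclideanSpace ℝ (Fin m)) (hu : ‖u‖ = 1) (k : ℕ) (s c : ℝ) (hs : s ≤ 1 / 2) :
    Integrable (fun g : Fin k → EuclideanSpace ℝ (Fin m) =>
      rexp (s / 2 * (∑ i, (inner ℝ u (g i)) ^ 2) - c))
      (Measure.pi fun _ => stdGaussian (EuclideanSpace ℝ (Fin m))) ∧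
    ∫ g : Fin k → EuclideanSpace ℝ (Fin m),
      rexp (s / 2 * (∑ i, (inner ℝ u (g i)) ^ 2) - c)
      ∂(Measure.pi fun _ => stdGaussian (EuclideanSpace ℝ (Fin m)))
      ≤ rexp (k * ((s + 2 * s ^ 2) / 2) - c) := by
  have h : ∀ g : Fin k → EuclideanSpace ℝ (Fin m),
      rexp (s / 2 * (∑ i, (inner ℝ u (g i)) ^ 2) - c)
      = rexp (-c) * ∏ i, rexp (s / 2 * (inner ℝ u (g i)) ^ 2) := by
    intro g
    rw [← Real.exp_sum, ← Real.exp_add, Finset.mul_sum]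
    congr 1
    ring
  have hint : ∫ g : Fin k → EuclideanSpace ℝ (Fin m),
      rexp (s / 2 * (∑ i, (inner ℝ u (g i)) ^ 2) - c)
      ∂(Measure.pi fun _ => stdGaussian (EuclideanSpace ℝ (Fin m)))
      = rexp (-c) * √(1 / (1 - s)) ^ k := by
    simp_rw [h]
    rw [integral_const_mul, integral_fintype_prod_eq_pow
      (fun g : EuclideanSpace ℝ (Fin m) => rexp (s / 2 * (inner ℝ u g) ^ 2)), jl_std u hu]
    simp
  have hpos : 0 < √(1 / (1 - s)) := by
    apply Real.sqrt_pos.2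
    apply one_div_pos.2
    linarith
  refine ⟨?_, ?_⟩
  · by_contra hn
    rw [integral_undef hn] at hint
    have : 0 < rexp (-c) * √(1 / (1 - s)) ^ k := by positivity
    linarith
  · rw [hint, sub_eq_neg_add _ c, Real.exp_add, Real.exp_nat_mul]
    gcongr
    exact jl_gauss_le s hs

lemma jl_exists (k : ℕ) (U : Finset (EuclideanSpace ℝ (Fin m))) (hU : ∀ u ∈ U, ‖u‖ = 1)
    (ε : ℝ) (h0 : 0 < ε) (h1 : ε < 1) (hk : 2 * (U.card : ℝ) * rexp (-(k * ε ^ 2 / 16)) < 1) :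
    ∃ g : Fin k → EuclideanSpace ℝ (Fin m), ∀ u ∈ U,
      (1 - ε) * k ≤ ∑ i, (inner ℝ u (g i)) ^ 2 ∧ ∑ i, (inner ℝ u (g i)) ^ 2 ≤ (1 + ε) * k := by
  let P : EuclideanSpace ℝ (Fin m) → (Fin k → EuclideanSpace ℝ (Fin m)) → ℝ := fun u g =>
    rexp ((ε / 4) / 2 * (∑ i, (inner ℝ u (g i)) ^ 2) - (ε / 8 * k + k * ε ^ 2 / 8))
  let N : EuclideanSpace ℝ (Fin m) → (Fin k → EuclideanSpace ℝ (Fin m)) → ℝ := fun u g =>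
    rexp ((-(ε / 4)) / 2 * (∑ i, (inner ℝ u (g i)) ^ 2) - (-(ε / 8 * k) + k * ε ^ 2 / 8))
  let μ := Measure.pi fun _ : Fin k => stdGaussian (EuclideanSpace ℝ (Fin m))
  have hP : ∀ u ∈ U, Integrable (P u) μ ∧ ∫ g, P u g ∂μ ≤ rexp (-(k * ε ^ 2 / 16)) := by
    intro u hu
    obtain ⟨h, h'⟩ := jl_pi u (hU u hu) k (ε / 4) (ε / 8 * k + k * ε ^ 2 / 8) (by linarith)
    refine ⟨h, h'.trans (Real.exp_le_exp.2 (le_of_eq ?_))⟩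
    ring
  have hN : ∀ u ∈ U, Integrable (N u) μ ∧ ∫ g, N u g ∂μ ≤ rexp (-(k * ε ^ 2 / 16)) := by
    intro u hu
    obtain ⟨h, h'⟩ := jl_pi u (hU u hu) k (-(ε / 4)) (-(ε / 8 * k) + k * ε ^ 2 / 8) (by linarith)
    refine ⟨h, h'.trans (Real.exp_le_exp.2 (le_of_eq ?_))⟩
    ring
  have hI : Integrable (fun g => ∑ u ∈ U, (P u g + N u g)) μ :=
    integrable_finsetSum _ fun u hu => (hP u hu).1.add (hN u hu).1
  obtain ⟨g, hg⟩ := exists_le_integral hI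
  have hlt : ∑ u ∈ U, (P u g + N u g) < 1 := by
    refine hg.trans_lt (lt_of_le_of_lt ?_ hk)
    have hadd : ∀ u ∈ U, Integrable (fun g => P u g + N u g) μ :=
      fun u hu => (hP u hu).1.add (hN u hu).1
    rw [integral_finsetSum _ hadd]
    calc ∑ u ∈ U, ∫ g, (P u g + N u g) ∂μ
        ≤ ∑ u ∈ U, 2 * rexp (-(k * ε ^ 2 / 16)) := by
          apply Finset.sum_le_sum
          intro u hu
          rw [integral_add (hP u hu).1 (hN u hu).1]
          linarith [(hP u hu).2, (hN u hu).2]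
      _ = _ := by rw [Finset.sum_const, nsmul_eq_mul]; ring
  refine ⟨g, fun u hu => ?_⟩
  have hPp : 0 < P u g := Real.exp_pos _
  have hNp : 0 < N u g := Real.exp_pos _
  have hle : P u g + N u g ≤ ∑ u ∈ U, (P u g + N u g) :=
    Finset.single_le_sum (f := fun u => P u g + N u g)
      (fun v _ => add_nonneg (Real.exp_pos _).le (Real.exp_pos _).le) hu
  have a : P u g < 1 := by linarith
  have b : N u g < 1 := by linarith
  have a' := Real.exp_lt_one_iff.1 a
  have b' := Real.exp_lt_one_iff.1 b
  constructor
  · by_contra hc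
    push Not at hc
    nlinarith [mul_pos h0 (sub_pos.2 hc)]
  · by_contra hc
    push Not at hc
    nlinarith [mul_pos h0 (sub_pos.2 hc)]

end JL

/-- **Johnson–Lindenstrauss Lemma.** There is a universal constant `C > 0` such that
for every `m ≥ 2`, every set `X` of `m` points in `ℝ^m` and every `0 < ε < 1`, there
are `k ≤ ⌈C · log m / ε²⌉` and a map `F : ℝ^m → ℝ^k` preserving all squared pairwise
distances of `X` up to factors `1 ± ε`. -/
theorem johnson_lindenstrauss :
    ∃ C : ℝ, 0 < C ∧
      ∀ m : ℕ, 2 ≤ m →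
        ∀ X : Finset (EuclideanSpace ℝ (Fin m)), X.card = m →
          ∀ ε : ℝ, 0 < ε → ε < 1 →
            ∃ k : ℕ, k ≤ ⌈C * Real.log m / ε ^ 2⌉₊ ∧
              ∃ F : EuclideanSpace ℝ (Fin m) → EuclideanSpace ℝ (Fin k),
                ∀ x ∈ X, ∀ y ∈ X,
                  (1 - ε) * ‖x - y‖ ^ 2 ≤ ‖F x - F y‖ ^ 2 ∧
                  ‖F x - F y‖ ^ 2 ≤ (1 + ε) * ‖x - y‖ ^ 2 := by
  classical
  refine ⟨64, by norm_num, ?_⟩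
  intro m hm X hX ε h0 h1
  refine ⟨_, le_rfl, ?_⟩
  have hk := Nat.le_ceil (64 * Real.log m / ε ^ 2)
  set k := ⌈64 * Real.log m / ε ^ 2⌉₊
  have hm' : (2 : ℝ) ≤ m := by exact_mod_cast hm
  have hlog : 0 < Real.log m := Real.log_pos (by linarith)
  have hkpos : (0 : ℝ) < k := lt_of_lt_of_le (by positivity) hk
  rw [div_le_iff₀ (by positivity)] at hk
  let U : Finset (EuclideanSpace ℝ (Fin m)) :=
    X.offDiag.image fun p => (‖p.1 - p.2‖)⁻¹ • (p.1 - p.2)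
  have hU : ∀ u ∈ U, ‖u‖ = 1 := by
    intro u hu
    obtain ⟨p, hp, rfl⟩ := Finset.mem_image.1 hu
    have hne : p.1 - p.2 ≠ 0 := sub_ne_zero.2 (Finset.mem_offDiag.1 hp).2.2
    rw [norm_smul, norm_inv, norm_norm]
    exact inv_mul_cancel₀ (norm_ne_zero_iff.2 hne)
  have hcard : (U.card : ℝ) ≤ (m : ℝ) ^ 2 := by
    have h2 : U.card ≤ m ^ 2 := by
      refine Finset.card_image_le.trans ?_
      rw [Finset.offDiag_card, hX, sq]
      exact Nat.sub_le _ _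
    exact_mod_cast h2
  have hexp : rexp (-(k * ε ^ 2 / 16)) ≤ ((m : ℝ) ^ 4)⁻¹ := by
    have : ((m : ℝ) ^ 4)⁻¹ = rexp (-(4 * Real.log m)) := by
      rw [Real.exp_neg]
      congr 1
      rw [show (4 : ℝ) = ((4 : ℕ) : ℝ) by norm_num, Real.exp_nat_mul, Real.exp_log (by linarith)]
    rw [this]
    exact Real.exp_le_exp.2 (by linarith)
  have hlt : 2 * (U.card : ℝ) * rexp (-(k * ε ^ 2 / 16)) < 1 := by
    calc 2 * (U.card : ℝ) * rexp (-(k * ε ^ 2 / 16))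
        ≤ 2 * (m : ℝ) ^ 2 * ((m : ℝ) ^ 4)⁻¹ := by gcongr
      _ = 2 / (m : ℝ) ^ 2 := by
        have : (m : ℝ) ≠ 0 := by linarith
        field_simp
      _ < 1 := by
        rw [div_lt_one (by positivity)]
        nlinarith
  obtain ⟨g, hg⟩ := jl_exists k U hU ε h0 h1 hlt
  refine ⟨fun x => WithLp.toLp 2 fun i => (√k)⁻¹ * inner ℝ x (g i), ?_⟩
  intro x hx y hy
  by_cases hxy : x = y
  · subst hxy
    simp
  have hn : 0 < ‖x - y‖ := norm_pos_iff.2 (sub_ne_zero.2 hxy)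
  obtain ⟨hl, hr⟩ := hg _ (Finset.mem_image.2 ⟨(x, y), Finset.mem_offDiag.2 ⟨hx, hy, hxy⟩, rfl⟩)
  simp only [real_inner_smul_left, mul_pow, ← Finset.mul_sum] at hl hr
  have hF : ‖(WithLp.toLp 2 fun i => (√(k : ℝ))⁻¹ * inner ℝ x (g i) : EuclideanSpace ℝ (Fin k))
      - WithLp.toLp 2 fun i => (√(k : ℝ))⁻¹ * inner ℝ y (g i)‖ ^ 2
      = (∑ i, (inner ℝ (x - y) (g i)) ^ 2) / k := by
    rw [EuclideanSpace.real_norm_sq_eq]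
    simp only [PiLp.sub_apply, ← mul_sub, ← inner_sub_left, mul_pow, ← Finset.mul_sum]
    rw [inv_pow, Real.sq_sqrt hkpos.le, inv_mul_eq_div]
  rw [hF]
  rw [inv_pow, inv_mul_eq_div] at hl hr
  rw [le_div_iff₀ (by positivity)] at hl
  rw [div_le_iff₀ (by positivity)] at hr
  rw [le_div_iff₀ hkpos, div_le_iff₀ hkpos]
  constructor <;> linarith
end

section
/- Let k ≥ 1 and let F_{χ²_k} denote the cumulative distribution function of the chi-squared distribution with k degrees of freedom, i.e., the distribution on [0,∞) with density x ↦ (2^{−k/2}/Γ(k/2)) x^{k/2 − 1} e^{−x/2}. Then for every δ with 0 < δ < 1, setting z = δ/k, one has F_{χ²_k}(δ) ≤ (z e^{1−z})^{k/2} < (e δ / k)^{k/2}. -/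
open MeasureTheory Real

/-- The chi-squared distribution with `k` degrees of freedom: the measure on `[0,∞)`
with Lebesgue density `x ↦ (2^{-k/2}/Γ(k/2)) x^{k/2-1} e^{-x/2}`. -/
noncomputable def chiSqMeasure (k : ℕ) : Measure ℝ :=
  (volume.restrict (Set.Ici (0 : ℝ))).withDensity fun x =>
    ENNReal.ofReal
      ((2 : ℝ) ^ (-(k : ℝ) / 2) / Real.Gamma ((k : ℝ) / 2) *
        x ^ ((k : ℝ) / 2 - 1) * Real.exp (-x / 2))

/-- The cumulative distribution function `F_{χ²_k}(t)` of the chi-squared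
distribution with `k` degrees of freedom. -/
noncomputable def chiSqCDF (k : ℕ) (t : ℝ) : ℝ :=
  (chiSqMeasure k (Set.Iic t)).toReal

/-- Pointwise Chernoff bound of the chi-squared density by a rescaled gamma density. -/
lemma chiSq_density_le (k : ℕ) (hk : 1 ≤ k) (δ : ℝ) (hδ0 : 0 < δ) (hδ1 : δ < 1)
    (x : ℝ) (hx0 : 0 ≤ x) (hx : x ≤ δ) :
    (2 : ℝ) ^ (-(k : ℝ) / 2) / Real.Gamma ((k : ℝ) / 2) *
        x ^ ((k : ℝ) / 2 - 1) * Real.exp (-x / 2) ≤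
    (δ / k * Real.exp (1 - δ / k)) ^ ((k : ℝ) / 2) *
      (((k : ℝ) / (2 * δ)) ^ ((k : ℝ) / 2) / Real.Gamma ((k : ℝ) / 2) *
        x ^ ((k : ℝ) / 2 - 1) * Real.exp (-((k : ℝ) / (2 * δ) * x))) := by
  have hk1 : (1 : ℝ) ≤ k := by exact_mod_cast hk
  have hk0 : (0 : ℝ) < k := by linarith
  have hG : 0 < Real.Gamma ((k : ℝ) / 2) := Real.Gamma_pos_of_pos (by positivity)
  have h2 : (2 : ℝ) ^ (-(k : ℝ) / 2) =
      (δ / k) ^ ((k : ℝ) / 2) * ((k : ℝ) / (2 * δ)) ^ ((k : ℝ) / 2) := by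
    rw [← Real.mul_rpow (by positivity) (by positivity)]
    have : δ / k * (k / (2 * δ)) = (2 : ℝ)⁻¹ := by field_simp
    rw [this, Real.inv_rpow (by norm_num), ← Real.rpow_neg (by norm_num), neg_div]
  have he : Real.exp (-x / 2) ≤
      Real.exp ((1 - δ / k) * (k / 2)) * Real.exp (-((k : ℝ) / (2 * δ) * x)) := by
    rw [← Real.exp_add]
    apply Real.exp_le_exp.2
    have : (1 - δ / k) * (k / 2) + -((k : ℝ) / (2 * δ) * x) - (-x / 2)
        = (k - δ) * (δ - x) / (2 * δ) := by
      field_simp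
      ring
    have h3 : 0 ≤ (k - δ) * (δ - x) / (2 * δ) :=
      div_nonneg (mul_nonneg (by linarith) (by linarith)) (by linarith)
    linarith
  rw [Real.mul_rpow (by positivity) (Real.exp_pos _).le, ← Real.exp_mul, h2]
  calc _ ≤ (δ / k) ^ ((k : ℝ) / 2) * ((k : ℝ) / (2 * δ)) ^ ((k : ℝ) / 2)
        / Real.Gamma ((k : ℝ) / 2) * x ^ ((k : ℝ) / 2 - 1) *
        (Real.exp ((1 - δ / k) * (k / 2)) * Real.exp (-((k : ℝ) / (2 * δ) * x))) :=
        mul_le_mul_of_nonneg_left he (by positivity)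
    _ = _ := by ring

/-- For `k ≥ 1` and `0 < δ < 1`, with `z = δ/k` one has
`F_{χ²_k}(δ) ≤ (z e^{1-z})^{k/2} < (eδ/k)^{k/2}`. -/
theorem chiSqCDF_bound (k : ℕ) (hk : 1 ≤ k) (δ : ℝ) (hδ0 : 0 < δ) (hδ1 : δ < 1) :
    chiSqCDF k δ ≤ (δ / k * Real.exp (1 - δ / k)) ^ ((k : ℝ) / 2) ∧
    (δ / k * Real.exp (1 - δ / k)) ^ ((k : ℝ) / 2) <
      (Real.exp 1 * δ / k) ^ ((k : ℝ) / 2) := by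
  have hk0 : (0 : ℝ) < k := by exact_mod_cast hk
  have hz : 0 < δ / k := by positivity
  constructor
  · have hB : 0 ≤ (δ / k * Real.exp (1 - δ / k)) ^ ((k : ℝ) / 2) := by positivity
    unfold chiSqCDF chiSqMeasure
    apply ENNReal.toReal_le_of_le_ofReal hB
    rw [withDensity_apply _ measurableSet_Iic, Measure.restrict_restrict measurableSet_Iic]
    calc _ ≤ ∫⁻ x in Set.Iic δ ∩ Set.Ici 0,
          ENNReal.ofReal ((δ / k * Real.exp (1 - δ / k)) ^ ((k : ℝ) / 2)) *
          ProbabilityTheory.gammaPDF ((k : ℝ) / 2) ((k : ℝ) / (2 * δ)) x := by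
          apply setLIntegral_mono' (measurableSet_Iic.inter measurableSet_Ici)
          rintro x ⟨hx, hx0⟩
          rw [ProbabilityTheory.gammaPDF_of_nonneg hx0, ← ENNReal.ofReal_mul hB]
          exact ENNReal.ofReal_le_ofReal (chiSq_density_le k hk δ hδ0 hδ1 x hx0 hx)
      _ ≤ ∫⁻ x, ENNReal.ofReal ((δ / k * Real.exp (1 - δ / k)) ^ ((k : ℝ) / 2)) *
          ProbabilityTheory.gammaPDF ((k : ℝ) / 2) ((k : ℝ) / (2 * δ)) x :=
          setLIntegral_le_lintegral _ _
      _ = _ := by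
          rw [lintegral_const_mul' _ _ ENNReal.ofReal_ne_top,
            ProbabilityTheory.lintegral_gammaPDF_eq_one (by positivity) (by positivity), mul_one]
  · apply Real.rpow_lt_rpow (by positivity) _ (by positivity)
    rw [mul_div_assoc, mul_comm]
    exact mul_lt_mul_of_pos_right (Real.exp_lt_exp.2 (by linarith)) hz
end
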